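/- Let l ≥ 1 and let P = {P_0,…,P_{l−1}} be a partition of ω into infinite sets with min P_i < min P_j whenever i < j. Let E ∈ 𝓔^{P'}_∞, let n < ω, set a = r_n(E), and let 𝓞 be any set of approximations of length n+1 (restrictions r_{n+1}(G) of members G of 𝓔^{P'}_∞). Then there exists F ∈ [a,E] such that either r_{n+1}(G) ∈ 𝓞 for every G ∈ [a,F], or r_{n+1}(G) ∉ 𝓞 for every G ∈ [a,F]. -/

import Mathlib

open Set

namespace DualRamsey

/-- `F` is a coarsening of `E` (written `F ≤ E` in the paper): every class of `F`
is a union of classes of `E`. -/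
def Coarsens {X : Type*} (F E : Setoid X) : Prop := ∀ a b, E.r a b → F.r a b

/-- The set of equivalence classes of a setoid. -/
def classes {X : Type*} (E : Setoid X) : Set (Set X) := {C | ∃ x, C = {y | E.r x y}}

/-- The set of minimal representatives of the classes of an equivalence relation on ℕ. -/
def minReps (E : Setoid ℕ) : Set ℕ := {n | ∀ m, E.r n m → n ≤ m}

/-- `pRep E k` is `p_k(E)`, the k-th minimal representative in increasing order. -/
noncomputable def pRep (E : Setoid ℕ) (k : ℕ) : ℕ := Nat.nth (· ∈ minReps E) k

/-- `approx n E` is the n-th approximation `r_n(E)`: `E` restricted to `{0,…,p_n(E)-1}`,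
identified with its graph. -/
noncomputable def approx (n : ℕ) (E : Setoid ℕ) : Set (ℕ × ℕ) :=
  {q | q.1 < pRep E n ∧ q.2 < pRep E n ∧ E.r q.1 q.2}

/-- Basic set `[a, E]` relative to a space `S` of equivalence relations. -/
noncomputable def basicSet (S : Set (Setoid ℕ)) (a : Set (ℕ × ℕ)) (E : ↥S) : Set ↥S :=
  {F | Coarsens F.1 E.1 ∧ ∃ n, approx n F.1 = a}

/-- The Ellentuck topology on a space `S` of equivalence relations. -/
noncomputable def ellentuckTop (S : Set (Setoid ℕ)) : TopologicalSpace ↥S :=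
  TopologicalSpace.generateFrom {U | ∃ a E, U = basicSet S a E}

def IsRamsey (S : Set (Setoid ℕ)) (X : Set ↥S) : Prop :=
  ∀ (a : Set (ℕ × ℕ)) (B : ↥S), (basicSet S a B).Nonempty →
    ∃ A ∈ basicSet S a B, basicSet S a A ⊆ X ∨ basicSet S a A ∩ X = ∅

def IsRamseyNull (S : Set (Setoid ℕ)) (X : Set ↥S) : Prop :=
  ∀ (a : Set (ℕ × ℕ)) (B : ↥S), (basicSet S a B).Nonempty →
    ∃ A ∈ basicSet S a B, basicSet S a A ∩ X = ∅

/-- The property of Baire with respect to the Ellentuck topology. -/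
noncomputable def HasBP (S : Set (Setoid ℕ)) (X : Set ↥S) : Prop :=
  ∃ O M : Set ↥S, (ellentuckTop S).IsOpen O ∧ @IsMeagre _ (ellentuckTop S) M ∧
    X = (O \ M) ∪ (M \ O)

/-- The Souslin operation applied to a scheme indexed by finite sequences of naturals. -/
def souslinOp {X : Type*} (A : List ℕ → Set X) : Set X :=
  ⋃ x : ℕ → ℕ, ⋂ n : ℕ, A ((List.range n).map x)

/-- `Y` belongs to the smallest field of sets containing all `t`-open sets and
closed under the Souslin operation. -/
def SouslinMeasurable {X : Type*} (t : TopologicalSpace X) (Y : Set X) : Prop :=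
  ∀ 𝒜 : Set (Set X),
    (∀ U, t.IsOpen U → U ∈ 𝒜) →
    (∀ A ∈ 𝒜, Aᶜ ∈ 𝒜) →
    (∀ A ∈ 𝒜, ∀ B ∈ 𝒜, A ∪ B ∈ 𝒜) →
    (∀ f : List ℕ → Set X, (∀ s, f s ∈ 𝒜) → souslinOp f ∈ 𝒜) →
    Y ∈ 𝒜

/-- The graph of an equivalence relation as a boolean-valued function. -/
noncomputable def graphMap {X : Type*} (E : Setoid X) : X × X → Bool :=
  fun q => @decide (E.r q.1 q.2) (Classical.dec _)

/-- The metrizable topology on a space of equivalence relations, as a subspace of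
`2^(X × X)` via graphs. -/
noncomputable def graphTop {X : Type*} (S : Set (Setoid X)) : TopologicalSpace ↥S :=
  TopologicalSpace.induced (fun E => graphMap E.1) inferInstance



/-- `𝓔^P_∞` for a partition `P` of ℕ into `l` infinite pieces: the `P`-alternating
equivalence relations, i.e. those with infinitely many classes whose k-th minimal
representative lies in `P (k mod l)`. -/
noncomputable def EPalt (l : ℕ) (hl : 0 < l) (P : Fin l → Set ℕ) : Set (Setoid ℕ) :=
  {E | (classes E).Infinite ∧ ∀ k : ℕ, pRep E k ∈ P ⟨k % l, Nat.mod_lt k hl⟩}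

/-- `𝓔^{P'}_∞`: the `P`-alternating equivalence relations such that moreover every
class whose minimum lies in `P i` is contained in `⋃_{j ≥ i} P j`. -/
noncomputable def EPalt' (l : ℕ) (hl : 0 < l) (P : Fin l → Set ℕ) : Set (Setoid ℕ) :=
  {E | E ∈ EPalt l hl P ∧
    ∀ x ∈ minReps E, ∀ i : Fin l, x ∈ P i → ∀ y, E.r x y → ∃ j : Fin l, i ≤ j ∧ y ∈ P j}

/-!
Equivalence relations on `ℕ` with infinitely many classes are the kernels of rigid surjections, and
coarsening amounts to composing with a rigid surjection of the class indices. So we may work on the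
indices of the classes of `E`, where `E` becomes equality. The indices after `n` are grouped into
consecutive blocks of length `l`, so that merging whole blocks respects residues modulo `l`; a
letter merges the members of one block with classes of index at most `n`. An infinite variable word
over this finite alphabet codes a coarsening whose new classes are numbered by its variables, and
`r_{n+1}` of a further coarsening is coded by a finite word obtained by substituting letters for
the variables. The infinite Carlson–Simpson theorem makes the colour of these words constant. Its
proof takes a minimal idempotent ultrafilter `w` on the words and an idempotent ultrafilter on the
variable words that lies in the left ideal of `w`.
-/

section LeftIdeal

variable {M : Type*} [Semigroup M] [TopologicalSpace M]

/-- A nonempty closed left ideal of a topological semigroup; the minimal ones carry the idempotents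
behind the Carlson–Simpson theorem. -/
structure IsClosedLeftIdeal (N : Set M) : Prop where
  isClosed : IsClosed N
  nonempty : N.Nonempty
  mul_mem : ∀ m, ∀ x ∈ N, m * x ∈ N

theorem exists_minimal_isClosedLeftIdeal [Nonempty M] [CompactSpace M] :
    ∃ N : Set M, Minimal IsClosedLeftIdeal N := by
  refine zorn_superset {N : Set M | IsClosedLeftIdeal N} fun c hc hchain => ?_
  rcases c.eq_empty_or_nonempty with rfl | hne
  · exact ⟨univ, ⟨isClosed_univ, univ_nonempty, fun _ _ _ => trivial⟩, by simp⟩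
  have : Nonempty c := hne.to_subtype
  refine ⟨⋂₀ c, ⟨isClosed_sInter fun N hN => (hc hN).isClosed, ?_, fun m x hx N hN =>
    (hc hN).mul_mem m x (hx N hN)⟩, fun N hN => sInter_subset_of_mem hN⟩
  exact IsCompact.nonempty_sInter_of_directed_nonempty_isCompact_isClosed
    (IsChain.directedOn hchain.symm) (fun N hN => (hc hN).nonempty)
    (fun N hN => (hc hN).isClosed.isCompact) (fun N hN => (hc hN).isClosed)

variable [CompactSpace M] [T2Space M]

theorem range_mul_right_eq_of_minimal (hcont : ∀ r : M, Continuous (· * r)) {N : Set M}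
    (hN : Minimal IsClosedLeftIdeal N) {x : M} (hx : x ∈ N) : range (· * x) = N := by
  refine hN.eq_of_subset ⟨(isCompact_range (hcont x)).isClosed, ⟨_, x, rfl⟩, ?_⟩ ?_
  · rintro m _ ⟨y, rfl⟩
    exact ⟨m * y, mul_assoc m y x⟩
  · rintro _ ⟨y, rfl⟩
    exact hN.prop.mul_mem y x hx

theorem exists_isIdempotentElem_forall_mul_eq [Nonempty M]
    (hcont : ∀ r : M, Continuous (· * r)) :
    ∃ w : M, IsIdempotentElem w ∧ ∀ z, IsIdempotentElem (z * w) → w * (z * w) = w := by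
  obtain ⟨N, hN⟩ := exists_minimal_isClosedLeftIdeal (M := M)
  obtain ⟨w, hwN, hw⟩ := exists_idempotent_in_compact_subsemigroup hcont N hN.prop.nonempty
    hN.prop.isClosed.isCompact fun x _ y hy => hN.prop.mul_mem x y hy
  refine ⟨w, hw, fun z hz => ?_⟩
  obtain ⟨u, hu : u * (z * w) = w⟩ : w ∈ range (· * (z * w)) := by
    rwa [range_mul_right_eq_of_minimal hcont hN (hN.prop.mul_mem z w hwN)]
  calc w * (z * w) = u * ((z * w) * (z * w)) := by rw [← mul_assoc u, hu]
    _ = w := by rw [hz.eq, hu]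

end LeftIdeal

section Words

attribute [local instance] Ultrafilter.mul Ultrafilter.semigroup

open Filter
open FreeMonoid (of ofList toList)

variable {A : Type*}

theorem ultrafilter_map_mul {M N F : Type*} [Mul M] [Mul N] [FunLike F M N] [MulHomClass F M N]
    (f : F) (U V : Ultrafilter M) : (U * V).map f = U.map f * V.map f := by
  refine Ultrafilter.coe_inj.mp (Filter.ext' fun p => ?_)
  simp only [Ultrafilter.eventually_mul, Ultrafilter.coe_map, eventually_map, map_mul]

/-- Substitution of the letter `a` for the variable, encoded as `none`, in a variable word. -/
def substVar (a : A) : FreeMonoid (Option A) →* FreeMonoid A :=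
  FreeMonoid.map (Option.getD · a)

theorem substVar_map_some (a : A) (s : FreeMonoid A) : substVar a (FreeMonoid.map some s) = s := by
  simp only [substVar, FreeMonoid.map_map]
  exact DFunLike.congr_fun FreeMonoid.map_id s

/-- The variable words starting with the variable. -/
def varWords (A : Type*) : Set (FreeMonoid (Option A)) := range (of none * ·)

theorem varWords_mem_mul {U : Ultrafilter (FreeMonoid (Option A))} (hU : varWords A ∈ U)
    (V : Ultrafilter (FreeMonoid (Option A))) : varWords A ∈ U * V := by
  refine (Ultrafilter.eventually_mul U V (· ∈ varWords A)).2 ?_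
  filter_upwards [hU]
  rintro _ ⟨x, rfl⟩
  exact Eventually.of_forall fun y => ⟨x * y, (mul_assoc _ _ _).symm⟩

theorem exists_idempotent_varWords_mem_mul (w : Ultrafilter (FreeMonoid (Option A))) :
    ∃ U V : Ultrafilter (FreeMonoid (Option A)),
      V = U * w ∧ varWords A ∈ V ∧ IsIdempotentElem V := by
  let T : Set (Ultrafilter (FreeMonoid (Option A))) := {V | varWords A ∈ V} ∩ range (· * w)
  have hne : T.Nonempty := by
    have hvar : varWords A ∈ (pure (of none) : Ultrafilter (FreeMonoid (Option A))) :=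
      Ultrafilter.mem_pure.2 ⟨1, mul_one (of none)⟩
    exact ⟨pure (of none) * w, varWords_mem_mul hvar w, _, rfl⟩
  have hclosed : IsClosed T := (ultrafilter_isClosed_basic _).inter
    (isCompact_range (Ultrafilter.continuous_mul_left w)).isClosed
  have hmul : ∀ x ∈ T, ∀ y ∈ T, x * y ∈ T := by
    rintro x ⟨hx, -⟩ _ ⟨-, z, rfl⟩
    exact ⟨varWords_mem_mul hx _, x * z, mul_assoc x z w⟩
  obtain ⟨_, ⟨hV, U, rfl⟩, hidem⟩ := exists_idempotent_in_compact_subsemigroup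
    Ultrafilter.continuous_mul_left T hne hclosed.isCompact hmul
  exact ⟨U, _, rfl, hV, hidem⟩

/- The idempotents obtained from `V` by substitution lie below the minimal idempotent `w`, hence
all generate its left ideal. -/
theorem exists_ultrafilter_substVar_absorbing (A : Type*) :
    ∃ (w : Ultrafilter (FreeMonoid A)) (V : Ultrafilter (FreeMonoid (Option A))),
      varWords A ∈ V ∧ (∀ a, w * V.map (substVar a) = w) ∧
      ∀ a b, V.map (substVar a) * V.map (substVar b) = V.map (substVar a) := by
  obtain ⟨w, -, habsorb⟩ := exists_isIdempotentElem_forall_mul_eq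
    (M := Ultrafilter (FreeMonoid A)) Ultrafilter.continuous_mul_left
  obtain ⟨U, V, hVU, hV, hidem⟩ := exists_idempotent_varWords_mem_mul (w.map (FreeMonoid.map some))
  have hsubst (a : A) : V.map (substVar a) = U.map (substVar a) * w := by
    have hid : substVar a ∘ FreeMonoid.map some = id := funext (substVar_map_some a)
    rw [hVU, ultrafilter_map_mul, Ultrafilter.map_map, hid, Ultrafilter.map_id]
  have hmul (a : A) : IsIdempotentElem (U.map (substVar a) * w) := by
    rw [← hsubst, IsIdempotentElem, ← ultrafilter_map_mul, hidem.eq]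
  have hw (a : A) : w * V.map (substVar a) = w := by
    rw [hsubst]
    exact habsorb _ (hmul a)
  refine ⟨w, V, hV, hw, fun a b => ?_⟩
  rw [hsubst a, mul_assoc, hw]

/-- A set of words all of whose finite subsets can be prolonged simultaneously inside the set by
every instance of one variable word. -/
def IsExtendable (Y : Set (List A)) : Prop :=
  ∀ B ⊆ Y, B.Finite → ∃ x : List (Option A), ∀ s ∈ B, ∀ a, s ++ (none :: x).map (·.getD a) ∈ Y

theorem exists_isExtendable_subset_fiber [Finite A] {κ : Type*} [Finite κ] (C : List A → κ) :
    ∃ (k : κ) (Y : Set (List A)), Y ⊆ C ⁻¹' {k} ∧ Y.Nonempty ∧ IsExtendable Y := by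
  obtain ⟨w, V, hV, hw, hVV⟩ := exists_ultrafilter_substVar_absorbing A
  obtain ⟨k, hk⟩ := (w.map (C ∘ toList)).eq_pure_of_finite
  have hC : ∀ᶠ s in w, C (toList s) = k :=
    show {k} ∈ w.map (C ∘ toList) from hk ▸ Ultrafilter.mem_pure.2 rfl
  let Y : Set (FreeMonoid A) :=
    {s | C (toList s) = k ∧ ∀ a, ∀ᶠ x in V, C (toList (s * substVar a x)) = k}
  have hY : ∀ᶠ s in w, s ∈ Y := hC.and <| eventually_all.2 fun a => by
    rw [← hw a] at hC
    exact hC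
  have hext (s : FreeMonoid A) (hs : s ∈ Y) (a : A) : ∀ᶠ x in V, s * substVar a x ∈ Y := by
    refine (hs.2 a).and <| eventually_all.2 fun b => ?_
    have hprod : ∀ᶠ y in (V.map (substVar a) * V.map (substVar b) : Ultrafilter _),
        C (toList (s * y)) = k := by
      rw [hVV]
      exact hs.2 a
    have hab : ∀ᶠ x in V, ∀ᶠ y in V, C (toList (s * (substVar a x * substVar b y))) = k := hprod
    simpa only [mul_assoc] using hab
  refine ⟨k, ofList ⁻¹' Y, fun s hs => hs.1, hY.exists, fun B hBY hB => ?_⟩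
  have hB : ∀ᶠ x in V, ∀ s ∈ B, ∀ a, ofList s * substVar a x ∈ Y :=
    (eventually_all_finite hB).2 fun s hs => eventually_all.2 (hext _ (hBY hs))
  obtain ⟨_, hx, x, rfl⟩ := (hB.and hV).exists
  exact ⟨toList x, hx⟩

end Words

section InfiniteVariableWord

variable {A : Type*}

/-- An infinite variable word over `A`: a sequence of letters and variables in which the variables
first occur in their natural order, the `i`-th one at position `τ i`. -/
structure IsVariableWord (Z : ℕ → A ⊕ ℕ) (τ : ℕ → ℕ) : Prop where
  strictMono : StrictMono τ
  apply_first : ∀ i, Z (τ i) = Sum.inr i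
  first_le : ∀ t i, Z t = Sum.inr i → τ i ≤ t

/-- The word of length `N` obtained from an infinite variable word by cutting it off and
substituting `f i` for the `i`-th variable. -/
def substPrefix (Z : ℕ → A ⊕ ℕ) (f : ℕ → A) (N : ℕ) : List A :=
  ((List.range N).map Z).map (Sum.elim id f)

theorem exists_forall_map_range_eq {α : Type*} {u : ℕ → List α}
    (hprefix : ∀ i, u i <+: u (i + 1)) (hlength : StrictMono fun i => (u i).length) :
    ∃ Z : ℕ → α, ∀ i, (List.range (u i).length).map Z = u i := by
  have hmono : ∀ i j, i ≤ j → u i <+: u j := fun i j hij =>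
    Nat.le_induction List.prefix_rfl (fun k _ ih => ih.trans (hprefix k)) j hij
  have hlt : ∀ t, t < (u (t + 1)).length := fun t => hlength.le_apply (x := t + 1)
  refine ⟨fun t => (u (t + 1))[t]'(hlt t), fun i => List.ext_getElem (by simp) fun t _ ht => ?_⟩
  simp only [List.getElem_map, List.getElem_range]
  rcases le_total i (t + 1) with h | h
  · exact ((hmono _ _ h).getElem ht).symm
  · exact (hmono _ _ h).getElem (hlt t)

theorem IsExtendable.exists_append_variable [Finite A] {Y : Set (List A)} (hY : IsExtendable Y)
    (i : ℕ) (u : List (A ⊕ ℕ)) (hu : ∀ f : ℕ → A, u.map (Sum.elim id f) ∈ Y) :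
    ∃ z : List (A ⊕ ℕ), (∀ k, Sum.inr k ∈ z → k = i) ∧
      ∀ f : ℕ → A, (u ++ Sum.inr i :: z).map (Sum.elim id f) ∈ Y := by
  have hfin : (range fun f : ℕ → A => u.map (Sum.elim id f)).Finite :=
    (List.finite_length_eq A u.length).subset (by rintro _ ⟨f, rfl⟩; simp)
  obtain ⟨x, hx⟩ := hY _ (range_subset_iff.2 hu) hfin
  refine ⟨x.map fun o => o.elim (Sum.inr i) Sum.inl, fun k hk => ?_, fun f => ?_⟩
  · obtain ⟨o, -, ho⟩ := List.mem_map.1 hk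
    cases o with
    | none => exact (Sum.inr_injective ho).symm
    | some a => cases ho
  · have hcomp : Sum.elim id f ∘ (fun o : Option A => o.elim (Sum.inr i) Sum.inl) =
        (·.getD (f i)) := by
      funext o
      cases o <;> rfl
    simpa [hcomp] using hx _ ⟨f, rfl⟩ (f i)

theorem IsExtendable.exists_isVariableWord [Finite A] {Y : Set (List A)} (hY : IsExtendable Y)
    (hne : Y.Nonempty) :
    ∃ (Z : ℕ → A ⊕ ℕ) (τ : ℕ → ℕ), IsVariableWord Z τ ∧ ∀ i f, substPrefix Z f (τ i) ∈ Y := by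
  obtain ⟨s, hs⟩ := hne
  choose! z hz_var hz_mem using hY.exists_append_variable
  let u : ℕ → List (A ⊕ ℕ) :=
    fun i => Nat.rec (s.map Sum.inl) (fun i v => v ++ Sum.inr i :: z i v) i
  have hu_succ : ∀ i, u (i + 1) = u i ++ Sum.inr i :: z i (u i) := fun _ => rfl
  have hu_mem : ∀ i (f : ℕ → A), (u i).map (Sum.elim id f) ∈ Y := by
    intro i
    induction i with
    | zero => simpa [u] using fun _ => hs
    | succ i ih => exact hz_mem i (u i) ih
  have hu_var : ∀ i k, Sum.inr k ∈ u i → k < i := by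
    intro i
    induction i with
    | zero => simp [u]
    | succ i ih =>
      intro k hk
      rw [hu_succ, List.mem_append, List.mem_cons] at hk
      rcases hk with hk | hk | hk
      · exact (ih k hk).trans i.lt_succ_self
      · exact (Sum.inr_injective hk).trans_lt i.lt_succ_self
      · exact (hz_var i (u i) (hu_mem i) k hk).trans_lt i.lt_succ_self
  have hu_length : StrictMono fun i => (u i).length :=
    strictMono_nat_of_lt_succ fun i => by simp [hu_succ]
  obtain ⟨Z, hZ⟩ := exists_forall_map_range_eq
    (fun i => hu_succ i ▸ List.prefix_append _ _) hu_length
  refine ⟨Z, fun i => (u i).length, ⟨hu_length, fun i => ?_, fun t i hti => ?_⟩, fun i f => ?_⟩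
  · have hget : (u (i + 1))[(u i).length]? = some (Sum.inr i) := by simp [hu_succ]
    rw [← hZ (i + 1), List.getElem?_map, List.getElem?_range (hu_length i.lt_succ_self)] at hget
    exact Option.some_injective _ hget
  · by_contra! hlt
    refine (hu_var i i ?_).false
    rw [← hZ i, ← hti]
    exact List.mem_map_of_mem (List.mem_range.2 hlt)
  · rw [substPrefix, hZ]
    exact hu_mem i f

/-- The infinite **Carlson–Simpson theorem** for words. -/
theorem exists_isVariableWord_forall_substPrefix_eq [Finite A] {κ : Type*} [Finite κ]
    (C : List A → κ) :
    ∃ (Z : ℕ → A ⊕ ℕ) (τ : ℕ → ℕ) (k : κ), IsVariableWord Z τ ∧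
      ∀ i f, C (substPrefix Z f (τ i)) = k := by
  obtain ⟨k, Y, hYk, hne, hY⟩ := exists_isExtendable_subset_fiber C
  obtain ⟨Z, τ, hZ, hmem⟩ := hY.exists_isVariableWord hne
  exact ⟨Z, τ, k, hZ, fun i f => hYk (hmem i f)⟩

end InfiniteVariableWord

section RigidSurjection

/-- A rigid surjection `c` of `ℕ`, given together with the section `m` that picks the minimum of
each fibre: the fibres of `c` are numbered in the order of their minima. Equivalence relations on
`ℕ` with infinitely many classes are the kernels of rigid surjections. -/
structure IsRigidSurjection (c m : ℕ → ℕ) : Prop where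
  strictMono : StrictMono m
  apply_section : ∀ j, c (m j) = j
  section_le : ∀ x, m (c x) ≤ x

namespace IsRigidSurjection

variable {c m θ Q : ℕ → ℕ}

theorem comp (hθ : IsRigidSurjection θ Q) (hc : IsRigidSurjection c m) :
    IsRigidSurjection (θ ∘ c) (m ∘ Q) where
  strictMono := hc.strictMono.comp hθ.strictMono
  apply_section j := by simp only [Function.comp_apply, hc.apply_section, hθ.apply_section]
  section_le x := (hc.strictMono.monotone (hθ.section_le (c x))).trans (hc.section_le x)

theorem apply_lt (hc : IsRigidSurjection c m) {x k : ℕ} (hx : x < m k) : c x < k :=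
  hc.strictMono.lt_iff_lt.1 ((hc.section_le x).trans_lt hx)

theorem apply_le (hc : IsRigidSurjection c m) (x : ℕ) : c x ≤ x :=
  (hc.strictMono.le_apply).trans (hc.section_le x)

theorem minReps_ker (hc : IsRigidSurjection c m) : minReps (Setoid.ker c) = range m := by
  ext x
  refine ⟨fun hx => ⟨c x, (hc.section_le x).antisymm (hx _ (hc.apply_section (c x)).symm)⟩, ?_⟩
  rintro ⟨j, rfl⟩ y (hy : c (m j) = c y)
  rw [hc.apply_section] at hy
  exact hy ▸ hc.section_le y

theorem pRep_ker (hc : IsRigidSurjection c m) : pRep (Setoid.ker c) = m := by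
  have hinf : (minReps (Setoid.ker c)).Infinite :=
    hc.minReps_ker ▸ infinite_range_of_injective hc.strictMono.injective
  refine ((Nat.nth_strictMono hinf).range_inj hc.strictMono).1 ?_
  rw [Nat.range_nth_of_infinite hinf]
  exact hc.minReps_ker

theorem infinite_classes_ker (hc : IsRigidSurjection c m) : (classes (Setoid.ker c)).Infinite := by
  refine infinite_of_injective_forall_mem (f := fun j => {y | c (m j) = c y})
    (fun i j hij => ?_) fun j => ⟨m j, rfl⟩
  have hmem : m j ∈ {y | c (m i) = c y} := (congrArg (m j ∈ ·) hij).mpr rfl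
  simpa only [mem_ofPred_eq, hc.apply_section] using hmem

theorem exists_eq_comp_of_coarsens {c' m' : ℕ → ℕ} (hc : IsRigidSurjection c m)
    (hc' : IsRigidSurjection c' m') (h : Coarsens (Setoid.ker c') (Setoid.ker c)) :
    ∃ θ Q, IsRigidSurjection θ Q ∧ θ ∘ c = c' ∧ m ∘ Q = m' := by
  have hfactor (x : ℕ) : c' (m (c x)) = c' x := h _ _ (hc.apply_section (c x))
  have hsection (j : ℕ) : m (c (m' j)) = m' j := by
    refine (hc.section_le _).antisymm ?_
    simpa only [hfactor, hc'.apply_section] using hc'.section_le (m (c (m' j)))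
  refine ⟨c' ∘ m, c ∘ m', ⟨fun i j hij => ?_, fun j => ?_, fun k => ?_⟩, funext hfactor,
    funext hsection⟩
  · rw [← hc.strictMono.lt_iff_lt]
    simpa only [Function.comp_apply, hsection] using hc'.strictMono hij
  · simp only [Function.comp_apply, hfactor, hc'.apply_section]
  · rw [← hc.strictMono.le_iff_le]
    simpa only [Function.comp_apply, hsection] using hc'.section_le (m k)

theorem apply_eq_self_of_section_eq_self (hθ : IsRigidSurjection θ Q) {k : ℕ} (hk : Q k = k) :
    θ k = k := by
  conv_lhs => rw [← hk, hθ.apply_section]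

theorem apply_eq_self_of_injOn (hθ : IsRigidSurjection θ Q) {n : ℕ} (hinj : InjOn θ (Iio n)) :
    ∀ k < n, θ k = k := by
  intro k
  induction k using Nat.strong_induction_on with
  | _ k ih =>
    intro hk
    rcases (hθ.apply_le k).lt_or_eq with hlt | heq
    · exact hinj (hlt.trans hk) hk (ih _ hlt (hlt.trans hk))
    · exact heq

end IsRigidSurjection

theorem exists_mem_minReps (E : Setoid ℕ) (x : ℕ) : ∃ y ∈ minReps E, E.r y x ∧ y ≤ x := by
  have hex : ∃ y, E.r y x := ⟨x, E.refl x⟩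
  classical
  exact ⟨Nat.find hex, fun z hz => Nat.find_min' hex (E.trans (E.symm hz) (Nat.find_spec hex)),
    Nat.find_spec hex, Nat.find_min' hex (E.refl x)⟩

theorem infinite_minReps {E : Setoid ℕ} (hE : (classes E).Infinite) : (minReps E).Infinite := by
  refine .of_image (fun x => {y | E.r x y}) (hE.mono ?_)
  rintro _ ⟨x, rfl⟩
  obtain ⟨y, hy, hyx, -⟩ := exists_mem_minReps E x
  exact ⟨y, hy, Set.ext fun z => ⟨E.trans (E.symm hyx), E.trans hyx⟩⟩

theorem exists_isRigidSurjection_ker_eq {E : Setoid ℕ} (hE : (classes E).Infinite) :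
    ∃ c m, IsRigidSurjection c m ∧ Setoid.ker c = E := by
  have hmono : StrictMono (pRep E) := Nat.nth_strictMono (infinite_minReps hE)
  have hrange : range (pRep E) = minReps E := Nat.range_nth_of_infinite (infinite_minReps hE)
  have hmem : ∀ j, pRep E j ∈ minReps E := fun j => hrange ▸ mem_range_self j
  have hinj : ∀ i j, E.r (pRep E i) (pRep E j) → i = j := fun i j h =>
    hmono.injective ((hmem i _ h).antisymm (hmem j _ (E.symm h)))
  have hex : ∀ x, ∃ j, E.r (pRep E j) x ∧ pRep E j ≤ x := by
    intro x
    obtain ⟨y, hy, hyx, hle⟩ := exists_mem_minReps E x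
    obtain ⟨j, rfl⟩ := hrange.symm ▸ hy
    exact ⟨j, hyx, hle⟩
  choose c hc hle using hex
  refine ⟨c, pRep E, ⟨hmono, fun j => hinj _ _ (hc _), hle⟩, Setoid.ext fun x y => ?_⟩
  refine ⟨fun hxy : c x = c y => E.trans (E.symm (hc x)) (hxy ▸ hc y), fun hxy => ?_⟩
  exact hinj _ _ (E.trans (hc x) (E.trans hxy (E.symm (hc y))))

end RigidSurjection

section Approximation

variable {c m θ Q : ℕ → ℕ}

/-- The graph of the kernel of `g` restricted to `{0, …, N - 1}`. -/
def initialKer (g : ℕ → ℕ) (N : ℕ) : Set (ℕ × ℕ) := {q | q.1 < N ∧ q.2 < N ∧ g q.1 = g q.2}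

theorem initialKer_congr {g g' : ℕ → ℕ} {N : ℕ} (h : ∀ x < N, g x = g' x) :
    initialKer g N = initialKer g' N := by
  ext ⟨x, y⟩
  refine and_congr_right fun hx => and_congr_right fun hy => ?_
  rw [h x hx, h y hy]

theorem eq_of_initialKer_eq {g g' : ℕ → ℕ} {N N' : ℕ} (h : initialKer g N = initialKer g' N') :
    N = N' := by
  refine eq_of_forall_lt_iff fun x => ?_
  simpa [initialKer] using Set.ext_iff.1 h (x, x)

theorem IsRigidSurjection.approx_ker (hc : IsRigidSurjection c m) (n : ℕ) :
    approx n (Setoid.ker c) = initialKer c (m n) := by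
  rw [approx, hc.pRep_ker]
  rfl

theorem IsRigidSurjection.exists_approx_comp_eq_iff (hc : IsRigidSurjection c m)
    (hθ : IsRigidSurjection θ Q) (n : ℕ) :
    (∃ n', approx n' (Setoid.ker (θ ∘ c)) = approx n (Setoid.ker c)) ↔ ∀ k ≤ n, Q k = k := by
  simp only [(hθ.comp hc).approx_ker, hc.approx_ker]
  refine ⟨fun ⟨n', h⟩ => ?_, fun hQ => ⟨n, ?_⟩⟩
  · have hQn' : Q n' = n := hc.strictMono.injective (eq_of_initialKer_eq h)
    have hinj : InjOn θ (Iio n) := fun i hi j hj hij => by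
      have hmem : (m i, m j) ∈ initialKer (θ ∘ c) ((m ∘ Q) n') :=
        ⟨by simpa [hQn'] using hc.strictMono hi, by simpa [hQn'] using hc.strictMono hj,
          by simpa [hc.apply_section] using hij⟩
      rw [h] at hmem
      simpa [hc.apply_section] using hmem.2.2
    have hlt : ∀ k < n, Q k = k := fun k hk =>
      (hθ.apply_eq_self_of_injOn hinj k hk ▸ hθ.section_le k).antisymm hθ.strictMono.le_apply
    have hn' : n' = n := by
      rcases (hθ.strictMono.le_apply.trans_eq hQn').lt_or_eq with h' | h'
      · exact (hlt n' h').symm.trans hQn'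
      · exact h'
    intro k hk
    rcases hk.lt_or_eq with hk | rfl
    · exact hlt k hk
    · exact hn' ▸ hQn'
  · rw [Function.comp_apply, hQ n le_rfl]
    exact initialKer_congr fun x hx =>
      hθ.apply_eq_self_of_section_eq_self (hQ _ (hc.apply_lt hx).le)

end Approximation

/-- A rigid surjection that shifts positions by multiples of `l` on the section side and does not
raise residues modulo `l`. Composing with these is what preserves membership in `EPalt'`. -/
structure IsResidueCompatible (l : ℕ) (θ Q : ℕ → ℕ) : Prop where
  section_mod : ∀ j, Q j % l = j % l
  apply_mod_le : ∀ k, θ k % l ≤ k % l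

section Alternating

variable {l : ℕ} {hl : 0 < l} {P : Fin l → Set ℕ} {c m θ Q : ℕ → ℕ}

theorem IsRigidSurjection.ker_mem_EPalt'_iff (hc : IsRigidSurjection c m)
    (hdisj : Pairwise (Function.onFun Disjoint P)) :
    Setoid.ker c ∈ EPalt' l hl P ↔ (∀ k, m k ∈ P ⟨k % l, Nat.mod_lt k hl⟩) ∧
      ∀ x, ∃ j : Fin l, c x % l ≤ j ∧ x ∈ P j := by
  rw [EPalt', EPalt, mem_ofPred_eq, mem_ofPred_eq, hc.pRep_ker, hc.minReps_ker,
    and_iff_right hc.infinite_classes_ker, forall_mem_range]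
  refine and_congr_right fun hm => ⟨fun h x => ?_, fun h j i hji x (hjx : c (m j) = c x) => ?_⟩
  · exact h (c x) ⟨c x % l, Nat.mod_lt _ hl⟩ (hm _) x (hc.apply_section (c x))
  · have hi : i = ⟨j % l, Nat.mod_lt j hl⟩ := hdisj.eq (not_disjoint_iff.2 ⟨m j, hji, hm j⟩)
    rw [hc.apply_section] at hjx
    subst hi hjx
    exact h x

theorem IsRigidSurjection.ker_comp_mem_EPalt'_iff (hc : IsRigidSurjection c m)
    (hE : Setoid.ker c ∈ EPalt' l hl P) (hdisj : Pairwise (Function.onFun Disjoint P))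
    (hθ : IsRigidSurjection θ Q) :
    Setoid.ker (θ ∘ c) ∈ EPalt' l hl P ↔ IsResidueCompatible l θ Q := by
  rw [hc.ker_mem_EPalt'_iff hdisj] at hE
  rw [(hθ.comp hc).ker_mem_EPalt'_iff hdisj]
  obtain ⟨hm, hclass⟩ := hE
  have hpiece {k : ℕ} {j : Fin l} (hk : m k ∈ P j) : k % l = j :=
    congrArg Fin.val (hdisj.eq (not_disjoint_iff.2 ⟨m k, hm k, hk⟩))
  refine ⟨fun ⟨hmQ, hclassθ⟩ => ⟨fun j => hpiece (hmQ j), fun k => ?_⟩,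
    fun h => ⟨fun j => ?_, fun x => ?_⟩⟩
  · obtain ⟨j, hj, hmj⟩ := hclassθ (m k)
    rw [Function.comp_apply, hc.apply_section] at hj
    exact hj.trans_eq (hpiece hmj).symm
  · simpa only [Function.comp_apply, h.section_mod] using hm (Q j)
  · obtain ⟨j, hj, hx⟩ := hclass x
    exact ⟨j, (h.apply_mod_le (c x)).trans hj, hx⟩

end Alternating

theorem exists_eq_add_mul_of_mod_eq {l : ℕ} {Q : ℕ → ℕ} (hQ : StrictMono Q)
    (hmod : ∀ j, Q j % l = j % l) (k : ℕ) : ∃ i, Q k = k + i * l := by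
  obtain ⟨i, hi⟩ := (Nat.modEq_iff_dvd' hQ.le_apply).1 (hmod k).symm
  exact ⟨i, by rw [mul_comm, ← hi, Nat.add_sub_cancel' hQ.le_apply]⟩

section Block

variable {n l : ℕ}

theorem eq_block_of_lt [NeZero l] {k : ℕ} (hk : n < k) :
    ∃ (t : ℕ) (r : Fin l), k = n + 1 + (t * l + r) := by
  obtain ⟨d, rfl⟩ := Nat.exists_eq_add_of_le hk
  exact ⟨d / l, Fin.ofNat l d, by simp [Nat.div_add_mod']⟩

theorem block_mod (n t l r : ℕ) : (n + 1 + (t * l + r)) % l = (n + 1 + r) % l := by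
  rw [add_left_comm, Nat.mul_add_mod_self_right]

theorem block_lt_block {t t' : ℕ} (r r' : Fin l) (h : t < t') :
    n + 1 + (t * l + r) < n + 1 + (t' * l + r') := by
  have := Nat.mul_le_mul_right l (Nat.succ_le_of_lt h)
  rw [Nat.succ_mul] at this
  omega

/-- The self-map of `ℕ` that fixes `0, …, n` and sends the `r`-th position of the `t`-th of the
blocks of length `l` following them to `f t r`. -/
def blockMap (n : ℕ) {l : ℕ} [NeZero l] (f : ℕ → Fin l → ℕ) (k : ℕ) : ℕ :=
  if k ≤ n then k else Function.uncurry f (Nat.divModEquiv l (k - (n + 1)))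

variable [NeZero l]

theorem blockMap_of_le (f : ℕ → Fin l → ℕ) {k : ℕ} (hk : k ≤ n) : blockMap n f k = k := if_pos hk

theorem blockMap_block (f : ℕ → Fin l → ℕ) (t : ℕ) (r : Fin l) :
    blockMap n f (n + 1 + (t * l + r)) = f t r := by
  have hblock : Nat.divModEquiv l (t * l + r) = (t, r) :=
    (Nat.divModEquiv l).apply_symm_apply (t, r)
  rw [blockMap, if_neg (by omega), Nat.add_sub_cancel_left, hblock,
    Function.uncurry_apply_pair]

/-- The letters of the alphabet to which the Carlson–Simpson theorem is applied: a letter assigns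
to the classes of one block of length `l` one of the first `n + 1` classes to be merged with. -/
abbrev BlockLetter (n l : ℕ) : Type :=
  {f : Fin l → Fin (n + 1) // ∀ r, (f r : ℕ) % l ≤ (n + 1 + r) % l}

instance : Inhabited (BlockLetter n l) := ⟨0, fun _ => by simp⟩

/-- The map coded by a word of block letters; beyond the blocks covered by the word its values
are irrelevant. -/
def wordMap (w : List (BlockLetter n l)) : ℕ → ℕ := blockMap n fun t r => (w.getD t default).1 r

/-- The map coded by an infinite variable word: the `i`-th variable stands for merging with
the `i`-th block. -/
def variableWordMap (Z : ℕ → BlockLetter n l ⊕ ℕ) : ℕ → ℕ :=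
  blockMap n fun t r => Sum.elim (fun a => (a.1 r : ℕ)) (fun i => n + 1 + (i * l + r)) (Z t)

/-- The map sending the `i`-th block to the `τ i`-th block. -/
def blockShift (n l : ℕ) [NeZero l] (τ : ℕ → ℕ) : ℕ → ℕ :=
  blockMap n fun i (r : Fin l) => n + 1 + (τ i * l + r)

theorem blockShift_of_le (τ : ℕ → ℕ) {k : ℕ} (hk : k ≤ n) : blockShift n l τ k = k :=
  blockMap_of_le _ hk

theorem blockShift_block (τ : ℕ → ℕ) (i : ℕ) (r : Fin l) :
    blockShift n l τ (n + 1 + (i * l + r)) = n + 1 + (τ i * l + r) :=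
  blockMap_block _ i r

theorem strictMono_blockShift {τ : ℕ → ℕ} (hτ : StrictMono τ) :
    StrictMono (blockShift n l τ) := by
  intro j j' hjj'
  rcases le_or_gt j' n with hj' | hj'
  · rwa [blockShift_of_le τ hj', blockShift_of_le τ (hjj'.le.trans hj')]
  obtain ⟨i', r', rfl⟩ := eq_block_of_lt (l := l) hj'
  rw [blockShift_block]
  rcases le_or_gt j n with hj | hj
  · rw [blockShift_of_le τ hj]
    omega
  obtain ⟨i, r, rfl⟩ := eq_block_of_lt (l := l) hj
  rw [blockShift_block]
  rcases lt_trichotomy i i' with h | rfl | h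
  · exact block_lt_block r r' (hτ h)
  · omega
  · exact absurd (block_lt_block r' r h) hjj'.not_gt

theorem blockShift_mod (τ : ℕ → ℕ) (j : ℕ) : blockShift n l τ j % l = j % l := by
  rcases le_or_gt j n with hj | hj
  · rw [blockShift_of_le τ hj]
  · obtain ⟨i, r, rfl⟩ := eq_block_of_lt (l := l) hj
    rw [blockShift_block, block_mod, block_mod]

variable {Z : ℕ → BlockLetter n l ⊕ ℕ} {τ : ℕ → ℕ}

theorem variableWordMap_of_le (Z : ℕ → BlockLetter n l ⊕ ℕ) {k : ℕ} (hk : k ≤ n) :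
    variableWordMap Z k = k :=
  blockMap_of_le _ hk

theorem variableWordMap_block (Z : ℕ → BlockLetter n l ⊕ ℕ) (t : ℕ) (r : Fin l) :
    variableWordMap Z (n + 1 + (t * l + r)) =
      Sum.elim (fun a => (a.1 r : ℕ)) (fun i => n + 1 + (i * l + r)) (Z t) :=
  blockMap_block _ t r

theorem IsVariableWord.isRigidSurjection (hZ : IsVariableWord Z τ) :
    IsRigidSurjection (variableWordMap Z) (blockShift n l τ) where
  strictMono := strictMono_blockShift hZ.strictMono
  apply_section j := by
    rcases le_or_gt j n with hj | hj
    · rw [blockShift_of_le τ hj, variableWordMap_of_le Z hj]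
    · obtain ⟨i, r, rfl⟩ := eq_block_of_lt (l := l) hj
      rw [blockShift_block, variableWordMap_block, hZ.apply_first, Sum.elim_inr]
  section_le k := by
    rcases le_or_gt k n with hk | hk
    · rw [variableWordMap_of_le Z hk, blockShift_of_le τ hk]
    obtain ⟨t, r, rfl⟩ := eq_block_of_lt (l := l) hk
    rw [variableWordMap_block]
    rcases hZt : Z t with a | i
    · rw [Sum.elim_inl, blockShift_of_le τ (a.1 r).is_le]
      exact (a.1 r).is_le.trans hk.le
    · rw [Sum.elim_inr, blockShift_block]
      have := Nat.mul_le_mul_right l (hZ.first_le t i hZt)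
      omega

theorem isResidueCompatible_variableWordMap (Z : ℕ → BlockLetter n l ⊕ ℕ) (τ : ℕ → ℕ) :
    IsResidueCompatible l (variableWordMap Z) (blockShift n l τ) where
  section_mod := blockShift_mod τ
  apply_mod_le k := by
    rcases le_or_gt k n with hk | hk
    · rw [variableWordMap_of_le Z hk]
    obtain ⟨t, r, rfl⟩ := eq_block_of_lt (l := l) hk
    rw [variableWordMap_block, block_mod]
    rcases Z t with a | i
    · exact a.2 r
    · rw [Sum.elim_inr, block_mod]

theorem exists_blockLetters_eq {θ : ℕ → ℕ} {i : ℕ} (hlt : ∀ k < n + 1 + i * l, θ k < n + 1)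
    (hmod : ∀ k, θ k % l ≤ k % l) :
    ∃ f : ℕ → BlockLetter n l, ∀ j < i, ∀ r, ((f j).1 r : ℕ) = θ (n + 1 + (j * l + r)) := by
  have hltθ : ∀ j < i, ∀ r : Fin l, θ (n + 1 + (j * l + r)) < n + 1 := fun j hj r =>
    hlt _ (block_lt_block r 0 hj)
  have hletter : ∀ j, ∃ a : BlockLetter n l,
      j < i → ∀ r, (a.1 r : ℕ) = θ (n + 1 + (j * l + r)) := by
    intro j
    by_cases hj : j < i
    · exact ⟨⟨fun r => ⟨_, hltθ j hj r⟩, fun r => block_mod n j l r ▸ hmod _⟩, fun _ _ => rfl⟩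
    · exact ⟨default, fun h => absurd h hj⟩
  choose f hf using hletter
  exact ⟨f, hf⟩

theorem apply_variableWordMap_eq_wordMap (hZ : IsVariableWord Z τ) {θ : ℕ → ℕ} {i : ℕ}
    (hfix : ∀ k ≤ n, θ k = k) {f : ℕ → BlockLetter n l}
    (hf : ∀ j < i, ∀ r, ((f j).1 r : ℕ) = θ (n + 1 + (j * l + r))) :
    ∀ k < n + 1 + τ i * l, θ (variableWordMap Z k) = wordMap (substPrefix Z f (τ i)) k := by
  intro k hk
  rcases le_or_gt k n with hkn | hkn
  · rw [variableWordMap_of_le Z hkn, hfix k hkn, wordMap, blockMap_of_le _ hkn]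
  obtain ⟨t, r, rfl⟩ := eq_block_of_lt (l := l) hkn
  have ht : t < τ i := by
    by_contra! hle
    have := Nat.mul_le_mul_right l hle
    omega
  have hletter : (substPrefix Z f (τ i)).getD t default = Sum.elim id f (Z t) := by
    rw [List.getD_eq_getElem _ _ (by simpa [substPrefix] using ht)]
    simp [substPrefix]
  rw [wordMap, blockMap_block, hletter, variableWordMap_block]
  rcases hZt : Z t with a | j
  · exact hfix _ (a.1 r).is_le
  · have hj : j < i := hZ.strictMono.lt_iff_lt.1 ((hZ.first_le t j hZt).trans_lt ht)
    exact (hf j hj r).symm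

/-- The pigeonhole principle for the relation of equality on `ℕ`. Here `C N g` is a colouring of
the finite functions `g` on `{0, …, N - 1}`, encoded by their extensions to `ℕ`. -/
theorem exists_isRigidSurjection_forall_color_eq {κ : Type*} [Finite κ] (n l : ℕ) [NeZero l]
    (C : ℕ → (ℕ → ℕ) → κ) (hC : ∀ N g g', (∀ k < N, g k = g' k) → C N g = C N g') :
    ∃ ψ M, IsRigidSurjection ψ M ∧ IsResidueCompatible l ψ M ∧ (∀ k ≤ n, M k = k) ∧
      ∃ color, ∀ θ Q, IsRigidSurjection θ Q → IsResidueCompatible l θ Q → (∀ k ≤ n, Q k = k) →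
        C (M (Q (n + 1))) (θ ∘ ψ) = color := by
  obtain ⟨Z, τ, color, hZ, hcolor⟩ := exists_isVariableWord_forall_substPrefix_eq
    fun w : List (BlockLetter n l) => C (n + 1 + w.length * l) (wordMap w)
  refine ⟨variableWordMap Z, blockShift n l τ, hZ.isRigidSurjection,
    isResidueCompatible_variableWordMap Z τ, fun k => blockShift_of_le τ, color,
    fun θ Q hθ hres hQ => ?_⟩
  obtain ⟨i, hi⟩ := exists_eq_add_mul_of_mod_eq hθ.strictMono hres.section_mod (n + 1)
  have hfix : ∀ k ≤ n, θ k = k := fun k hk => hθ.apply_eq_self_of_section_eq_self (hQ k hk)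
  obtain ⟨f, hf⟩ := exists_blockLetters_eq (fun k hk => hθ.apply_lt (hi ▸ hk)) hres.apply_mod_le
  have hshift : blockShift n l τ (Q (n + 1)) = n + 1 + τ i * l := by
    rw [hi]
    exact blockShift_block τ i 0
  rw [hshift, hC _ (θ ∘ variableWordMap Z) _
    (apply_variableWordMap_eq_wordMap hZ hfix hf), ← hcolor i f]
  simp only [substPrefix, List.length_map, List.length_range]

end Block

theorem EPalt'Pigeonhole_general {κ : Type*} [Finite κ] (l : ℕ) (hl : 0 < l) (P : Fin l → Set ℕ)
    (hdisj : Pairwise (Function.onFun Disjoint P)) (E : ↥(EPalt' l hl P)) (n : ℕ)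
    (C : Set (ℕ × ℕ) → κ) :
    ∃ F ∈ basicSet (EPalt' l hl P) (approx n E.1) E, ∃ color,
      ∀ G ∈ basicSet (EPalt' l hl P) (approx n E.1) F, C (approx (n + 1) G.1) = color := by
  obtain ⟨E, hE⟩ := E
  have : NeZero l := ⟨hl.ne'⟩
  obtain ⟨c, m, hc, rfl⟩ := exists_isRigidSurjection_ker_eq hE.1.1
  obtain ⟨ψ, M, hψ, hψres, hM, color, hcolor⟩ := exists_isRigidSurjection_forall_color_eq n l
    (fun N g => C (initialKer (g ∘ c) (m N)))
    fun N g g' h => congrArg C (initialKer_congr fun x hx => h _ (hc.apply_lt hx))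
  have hψc := hψ.comp hc
  have hF : Setoid.ker (ψ ∘ c) ∈ EPalt' l hl P := (hc.ker_comp_mem_EPalt'_iff hE hdisj hψ).2 hψres
  refine ⟨⟨_, hF⟩, ⟨fun x y hxy => congrArg ψ hxy, (hc.exists_approx_comp_eq_iff hψ n).2 hM⟩,
    color, ?_⟩
  rintro ⟨G, hG⟩ ⟨hGF, hGa⟩
  obtain ⟨c', m', hc', rfl⟩ := exists_isRigidSurjection_ker_eq hG.1.1
  obtain ⟨θ, Q, hθ, rfl, rfl⟩ := hψc.exists_eq_comp_of_coarsens hc' hGF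
  have hQ : ∀ k ≤ n, M (Q k) = k := (hc.exists_approx_comp_eq_iff (hθ.comp hψ) n).1 hGa
  rw [hc'.approx_ker]
  refine hcolor θ Q hθ ((hψc.ker_comp_mem_EPalt'_iff hF hdisj hθ).1 hG) fun k hk =>
    hψ.strictMono.injective ((hQ k hk).trans (hM k hk).symm)

/-- **Pigeonhole (axiom A.4) for `𝓔^{P'}_∞`.** -/
theorem EPalt'Pigeonhole
    (l : ℕ) (hl : 0 < l) (P : Fin l → Set ℕ)
    (hinf : ∀ i, (P i).Infinite)
    (hdisj : ∀ i j, i ≠ j → Disjoint (P i) (P j))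
    (hcov : ⋃ i, P i = Set.univ)
    (hmin : ∀ i j : Fin l, i < j → sInf (P i) < sInf (P j))
    (E : ↥(EPalt' l hl P)) (n : ℕ)
    (O : Set (Set (ℕ × ℕ)))
    (hO : O ⊆ {b | ∃ G ∈ EPalt' l hl P, b = approx (n + 1) G}) :
    ∃ F ∈ basicSet (EPalt' l hl P) (approx n E.1) E,
      (∀ G ∈ basicSet (EPalt' l hl P) (approx n E.1) F, approx (n + 1) G.1 ∈ O) ∨
      (∀ G ∈ basicSet (EPalt' l hl P) (approx n E.1) F, approx (n + 1) G.1 ∉ O) := by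
  obtain ⟨F, hF, p, hp⟩ := EPalt'Pigeonhole_general l hl P (fun i j => hdisj i j) E n (· ∈ O)
  exact ⟨F, hF, (em p).imp (fun h G hG => (hp G hG).mpr h) fun h G hG hO => h ((hp G hG).mp hO)⟩

end DualRamsey
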